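/- arXiv:1204.6160 — 2 statements merged into one kernel-verified Lean document; each statement's English description precedes it below -/
import Mathlib

section
/- Let k : [0,∞) → ℝ be convex, differentiable and nonincreasing, and set g = −k′ (so g ≥ 0). Let x₁, …, xₙ ∈ ℝ^d, let H be a symmetric positive definite d×d matrix, and set q_i(y) = (y−x_i)^⊤ H^{−1} (y−x_i). Suppose y ∈ ℝ^d satisfies ∑_{i=1}^n g(q_i(y)) > 0, and define the mean shift update y′ = (∑_{i=1}^n x_i g(q_i(y))) / (∑_{i=1}^n g(q_i(y))). Then ∑_{i=1}^n k(q_i(y′)) ≥ ∑_{i=1}^n k(q_i(y)); equivalently, the kernel density estimate f̂_H(y) = n^{−1}(det H)^{−1/2}(1/2)∑_i k(q_i(y)) does not decrease under one step of the mean shift algorithm with unconstrained bandwidth matrix H. -/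
/-!
Convexity puts `k` above its tangent lines: `k t ≥ k s - g s * (t - s)` on `[0, ∞)`. Applying this
with `s = q_i(y)`, `t = q_i(y')` and summing, the increase of `∑ k(q_i)` is at least
`∑ g_i (q_i(y) - q_i(y'))`, where `g_i = g(q_i(y))`. Since `y'` is the `g`-weighted mean of the
`x_i`, the parallel-axis identity makes this last sum equal to
`(∑ g_i) (y - y')ᵀ H⁻¹ (y - y')`, which is nonnegative because `H⁻¹` is positive definite.
-/

open MeasureTheory Matrix

/-- The quadratic form `q_i(y) = (y − x_i)ᵀ H⁻¹ (y − x_i)`. -/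
noncomputable def msQuad {d n : ℕ} (H : Matrix (Fin d) (Fin d) ℝ) (x : Fin n → (Fin d → ℝ))
    (i : Fin n) (y : Fin d → ℝ) : ℝ :=
  (y - x i) ⬝ᵥ H⁻¹.mulVec (y - x i)

/-- `g = −k′` for a profile `k` defined on `[0,∞)`. -/
noncomputable def msG (k : ℝ → ℝ) (t : ℝ) : ℝ :=
  -(derivWithin k (Set.Ici 0) t)

/-- A convex profile lies above its tangent lines; at `0` the tangent is the one-sided one. -/
lemma msG_tangent_le {k : ℝ → ℝ} (hconv : ConvexOn ℝ (Set.Ici 0) k)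
    (hdiff : DifferentiableOn ℝ k (Set.Ici 0)) {s t : ℝ} (hs : 0 ≤ s) (ht : 0 ≤ t) :
    k s + msG k s * (s - t) ≤ k t := by
  unfold msG
  rcases lt_trichotomy s t with h | rfl | h
  · have h1 := hconv.derivWithin_le_slope hs ht h (hdiff s hs)
    rw [slope_def_field, le_div_iff₀ (sub_pos.2 h)] at h1
    linarith
  · simp
  · have h1 := hconv.slope_le_derivWithin ht hs h (hdiff s hs)
    rw [slope_def_field, div_le_iff₀ (sub_pos.2 h)] at h1
    linarith

lemma msQuad_nonneg {d n : ℕ} {H : Matrix (Fin d) (Fin d) ℝ} (hH : H.PosDef)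
    (x : Fin n → (Fin d → ℝ)) (i : Fin n) (y : Fin d → ℝ) : 0 ≤ msQuad H x i y := by
  simpa [msQuad] using hH.inv.posSemidef.dotProduct_mulVec_nonneg (y - x i)

/-- Parallel-axis identity: if the weighted deviations of the `x i` from `y'` cancel, moving the
base point from `y'` to `y` changes the weighted sum of quadratic forms by the total weight times
the quadratic form of `y - y'`, because both cross terms vanish. -/
lemma sum_weight_mul_msQuad_sub {d n : ℕ} (H : Matrix (Fin d) (Fin d) ℝ)
    (x : Fin n → (Fin d → ℝ)) (w : Fin n → ℝ) (y y' : Fin d → ℝ)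
    (h0 : ∑ i, w i • (y' - x i) = 0) :
    ∑ i, w i * (msQuad H x i y - msQuad H x i y') =
      (∑ i, w i) * ((y - y') ⬝ᵥ H⁻¹.mulVec (y - y')) := by
  have expand : ∀ i, w i * (msQuad H x i y - msQuad H x i y') =
      w i * ((y - y') ⬝ᵥ H⁻¹.mulVec (y - y')) + (y - y') ⬝ᵥ H⁻¹.mulVec (w i • (y' - x i))
        + (w i • (y' - x i)) ⬝ᵥ H⁻¹.mulVec (y - y') := by
    intro i
    have hsplit : y - x i = (y - y') + (y' - x i) := by abel
    unfold msQuad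
    rw [hsplit]
    generalize y - y' = u
    generalize y' - x i = v
    simp only [mulVec_add, mulVec_smul, dotProduct_add, add_dotProduct, dotProduct_smul,
      smul_dotProduct, smul_eq_mul]
    ring
  simp only [expand, Finset.sum_add_distrib]
  rw [← dotProduct_sum, ← mulVec_sum, ← sum_dotProduct, h0, Finset.sum_mul]
  simp

/-- The mean shift step does not decrease the kernel density estimate: if the profile
`k : [0,∞) → ℝ` is convex, differentiable and nonincreasing, `g = −k′`, and
`y′ = (∑ᵢ x_i g(q_i(y))) / (∑ᵢ g(q_i(y)))` is the mean shift update of `y` (well defined since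
`∑ᵢ g(q_i(y)) > 0`), where `q_i(y) = (y−x_i)ᵀ H⁻¹ (y−x_i)`, then
`∑ᵢ k(q_i(y′)) ≥ ∑ᵢ k(q_i(y))`; equivalently the kernel density estimate
`f̂_H(y) = n⁻¹ (det H)^{−1/2} (1/2) ∑ᵢ k(q_i(y))` does not decrease under one mean shift step
with unconstrained bandwidth matrix `H`. -/
theorem meanShift_step_le {d n : ℕ} (k : ℝ → ℝ)
    (hconv : ConvexOn ℝ (Set.Ici 0) k)
    (hdiff : DifferentiableOn ℝ k (Set.Ici 0))
    (hmono : AntitoneOn k (Set.Ici 0))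
    (x : Fin n → (Fin d → ℝ)) (H : Matrix (Fin d) (Fin d) ℝ) (hH : H.PosDef)
    (y : Fin d → ℝ) (hpos : 0 < ∑ i, msG k (msQuad H x i y))
    (y' : Fin d → ℝ)
    (hy' : y' = (∑ i, msG k (msQuad H x i y))⁻¹ • ∑ i, msG k (msQuad H x i y) • x i) :
    ∑ i, k (msQuad H x i y) ≤ ∑ i, k (msQuad H x i y') := by
  set w : Fin n → ℝ := fun i => msG k (msQuad H x i y)
  have h0 : ∑ i, w i • (y' - x i) = 0 := by
    simp only [smul_sub, Finset.sum_sub_distrib]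
    rw [← Finset.sum_smul, hy', smul_inv_smul₀ hpos.ne', sub_self]
  have hid := sum_weight_mul_msQuad_sub H x w y y' h0
  have hq : 0 ≤ (y - y') ⬝ᵥ H⁻¹.mulVec (y - y') := by
    simpa using hH.inv.posSemidef.dotProduct_mulVec_nonneg (y - y')
  have htan : ∑ i, (k (msQuad H x i y) + w i * (msQuad H x i y - msQuad H x i y')) ≤
      ∑ i, k (msQuad H x i y') :=
    Finset.sum_le_sum fun i _ =>
      msG_tangent_le hconv hdiff (msQuad_nonneg hH x i y) (msQuad_nonneg hH x i y')
  rw [Finset.sum_add_distrib, hid] at htan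
  have hprod := mul_nonneg hpos.le hq
  linarith
end

section
/- Let k : [0,∞) → ℝ be convex, differentiable and with k′(t) < 0 for all t ≥ 0, and set g = −k′. Let x₁, …, xₙ ∈ ℝ^d, let H be a symmetric positive definite d×d matrix, set q_i(y) = (y−x_i)^⊤ H^{−1} (y−x_i), and define the mean shift sequence Y₀ ∈ ℝ^d arbitrary and Y_{j+1} = (∑_{i=1}^n x_i g(q_i(Y_j))) / (∑_{i=1}^n g(q_i(Y_j))). Then the real sequence j ↦ ∑_{i=1}^n k(q_i(Y_j)) is nondecreasing, bounded above by n·k(0), and hence convergent; equivalently, the sequence of density estimate values f̂_H(Y_j) = n^{−1}(det H)^{−1/2}(1/2)∑_i k(q_i(Y_j)) converges. -/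
/-!
A convex profile lies above its tangents: `k s - k t ≥ g t * (t - s)` for `s, t ≥ 0`
(`msG_tangent`). Summed over the data points with `t = q_i(Y_j)` and `s = q_i(Y_{j+1})`, this
bounds the increment of `∑ᵢ k(q_i(Y_j))` below by `∑ᵢ g_i (q_i(Y_j) - q_i(Y_{j+1}))`, where
`g_i = g(q_i(Y_j)) > 0`. Since `Y_{j+1}` is the `g_i`-weighted mean of the `x_i`, the cross term in
the expansion of `q_i` around `Y_{j+1}` cancels (`sum_mul_msQuad_sub`), and the bound equals
`(∑ᵢ g_i) (Y_j - Y_{j+1})ᵀ H⁻¹ (Y_j - Y_{j+1}) ≥ 0`. The tangent inequality with `s = 0` gives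
`k t ≤ k 0`, hence the upper bound, and a bounded monotone real sequence converges.
-/

open MeasureTheory Matrix Filter

theorem msG_tangent {k : ℝ → ℝ} (hconv : ConvexOn ℝ (Set.Ici 0) k)
    (hdiff : DifferentiableOn ℝ k (Set.Ici 0)) {s t : ℝ} (hs : 0 ≤ s) (ht : 0 ≤ t) :
    msG k t * (t - s) ≤ k s - k t := by
  unfold msG
  rcases lt_trichotomy s t with h | h | h
  · have h1 := hconv.slope_le_derivWithin hs ht h (hdiff t ht)
    rw [slope_def_field, div_le_iff₀ (sub_pos.2 h)] at h1
    linarith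
  · simp [h]
  · have h1 := hconv.derivWithin_le_slope ht hs h (hdiff t ht)
    rw [slope_def_field, le_div_iff₀ (sub_pos.2 h)] at h1
    linarith

theorem inv_quad_nonneg {d : ℕ} {H : Matrix (Fin d) (Fin d) ℝ} (hH : H.PosDef)
    (v : Fin d → ℝ) : 0 ≤ v ⬝ᵥ H⁻¹.mulVec v := by
  simpa using hH.inv.posSemidef.dotProduct_mulVec_nonneg v

/-- The parallel axis (Huygens) identity: if `z` is the `w`-weighted mean of the `x i`, moving the
base point from `z` to `y` raises the weighted sum of the quadratic forms by the total weight times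
the quadratic form of `y - z`. -/
theorem sum_mul_msQuad_sub {d n : ℕ} {H : Matrix (Fin d) (Fin d) ℝ} (hH : H.PosDef)
    (x : Fin n → (Fin d → ℝ)) (w : Fin n → ℝ) (y z : Fin d → ℝ)
    (hz : (∑ i, w i) • z = ∑ i, w i • x i) :
    ∑ i, w i * (msQuad H x i y - msQuad H x i z)
      = (∑ i, w i) * ((y - z) ⬝ᵥ H⁻¹.mulVec (y - z)) := by
  have hsymm : ∀ u v : Fin d → ℝ, u ⬝ᵥ H⁻¹.mulVec v = v ⬝ᵥ H⁻¹.mulVec u := by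
    intro u v
    have hT : (H⁻¹)ᵀ = H⁻¹ := by simpa [Matrix.IsHermitian] using hH.inv.isHermitian
    rw [Matrix.dotProduct_mulVec, ← Matrix.mulVec_transpose, hT, dotProduct_comm]
  have hexp : ∀ i, msQuad H x i y - msQuad H x i z
      = (y - z) ⬝ᵥ H⁻¹.mulVec (y - z) + 2 * ((y - z) ⬝ᵥ H⁻¹.mulVec (z - x i)) := by
    intro i
    have hy : y - x i = (y - z) + (z - x i) := by abel
    unfold msQuad
    rw [hy, Matrix.mulVec_add, add_dotProduct, dotProduct_add, dotProduct_add,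
      hsymm (z - x i) (y - z)]
    ring
  have hzero : ∑ i, w i • (z - x i) = 0 := by
    simp only [smul_sub, Finset.sum_sub_distrib, ← Finset.sum_smul, hz, sub_self]
  have hcross : ∑ i, w i * ((y - z) ⬝ᵥ H⁻¹.mulVec (z - x i)) = 0 := by
    have h : (y - z) ⬝ᵥ H⁻¹.mulVec (∑ i, w i • (z - x i)) = 0 := by simp [hzero]
    rw [Matrix.mulVec_sum, dotProduct_sum] at h
    simpa only [Matrix.mulVec_smul, dotProduct_smul, smul_eq_mul] using h
  calc ∑ i, w i * (msQuad H x i y - msQuad H x i z)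
      = (∑ i, w i) * ((y - z) ⬝ᵥ H⁻¹.mulVec (y - z))
        + 2 * ∑ i, w i * ((y - z) ⬝ᵥ H⁻¹.mulVec (z - x i)) := by
        rw [Finset.sum_mul, Finset.mul_sum, ← Finset.sum_add_distrib]
        refine Finset.sum_congr rfl fun i _ => ?_
        rw [hexp i]
        ring
    _ = _ := by rw [hcross]; ring

/-- Convergence of the density estimate values along the mean shift iterates: if the profile
`k : [0,∞) → ℝ` is convex, differentiable with `k′ < 0` on `[0,∞)`, `g = −k′`, and the mean
shift sequence is `Y_{j+1} = (∑ᵢ x_i g(q_i(Y_j))) / (∑ᵢ g(q_i(Y_j)))` with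
`q_i(y) = (y−x_i)ᵀ H⁻¹ (y−x_i)`, then `j ↦ ∑ᵢ k(q_i(Y_j))` is nondecreasing, bounded above by
`n·k(0)`, and hence convergent; equivalently the kernel density estimate values
`f̂_H(Y_j) = n⁻¹ (det H)^{−1/2} (1/2) ∑ᵢ k(q_i(Y_j))` converge. -/
theorem meanShift_kde_values_converge {d n : ℕ} (k : ℝ → ℝ)
    (hconv : ConvexOn ℝ (Set.Ici 0) k)
    (hdiff : DifferentiableOn ℝ k (Set.Ici 0))
    (hder : ∀ t : ℝ, 0 ≤ t → derivWithin k (Set.Ici 0) t < 0)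
    (x : Fin n → (Fin d → ℝ)) (H : Matrix (Fin d) (Fin d) ℝ) (hH : H.PosDef)
    (Y : ℕ → (Fin d → ℝ))
    (hY : ∀ j, Y (j + 1)
      = (∑ i, msG k (msQuad H x i (Y j)))⁻¹ • ∑ i, msG k (msQuad H x i (Y j)) • x i) :
    Monotone (fun j => ∑ i, k (msQuad H x i (Y j)))
      ∧ (∀ j, ∑ i, k (msQuad H x i (Y j)) ≤ n * k 0)
      ∧ ∃ l : ℝ, Tendsto (fun j => ∑ i, k (msQuad H x i (Y j))) atTop (nhds l) := by
  have hq : ∀ i y, 0 ≤ msQuad H x i y := fun i y => inv_quad_nonneg hH _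
  have hg : ∀ i y, 0 < msG k (msQuad H x i y) := fun i y => neg_pos.2 (hder _ (hq i y))
  have hmono : Monotone (fun j => ∑ i, k (msQuad H x i (Y j))) := by
    refine monotone_nat_of_le_succ fun j => ?_
    -- For `n = 0` the total weight vanishes, but then both sides below are empty sums.
    have hz : (∑ i, msG k (msQuad H x i (Y j))) • Y (j + 1)
        = ∑ i, msG k (msQuad H x i (Y j)) • x i := by
      rcases isEmpty_or_nonempty (Fin n) with hn | hn
      · simp
      · have hpos := Finset.sum_pos (fun i _ => hg i (Y j)) Finset.univ_nonempty
        rw [hY j, smul_inv_smul₀ hpos.ne']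
    have hid := sum_mul_msQuad_sub hH x _ (Y j) (Y (j + 1)) hz
    have hnonneg := mul_nonneg (Finset.sum_nonneg fun i _ => (hg i (Y j)).le)
      (inv_quad_nonneg hH (Y j - Y (j + 1))) (a := ∑ i, msG k (msQuad H x i (Y j)))
    have htan := Finset.sum_le_sum fun i (_ : i ∈ Finset.univ) =>
      msG_tangent hconv hdiff (hq i (Y (j + 1))) (hq i (Y j))
    rw [hid, Finset.sum_sub_distrib] at htan
    linarith
  have hbdd : ∀ j, ∑ i, k (msQuad H x i (Y j)) ≤ n * k 0 := by
    intro j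
    have hle : ∀ i, k (msQuad H x i (Y j)) ≤ k 0 := fun i => by
      have h := msG_tangent hconv hdiff le_rfl (hq i (Y j))
      have h' := mul_nonneg (hg i (Y j)).le (hq i (Y j))
      rw [sub_zero] at h
      linarith
    simpa using Finset.sum_le_sum fun i (_ : i ∈ Finset.univ) => hle i
  refine ⟨hmono, hbdd, _, tendsto_atTop_ciSup hmono ⟨n * k 0, ?_⟩⟩
  rintro _ ⟨j, rfl⟩
  exact hbdd j
end
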